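/- Fix integers N ≥ 1 and n ≥ 1 and a point x = (x₁,…,x_n) ∈ ℂⁿ; let S ⊆ ℂ be the set of values occurring among the x_j, and for y ∈ S let j₁(y) < ⋯ < j_{m_y}(y) be the indices j with x_j = y. Call a tuple (L₁,…,L_n) of ℂ[z]-submodules of ℂ(z)^N an admissible chain if, with L₀ = ℂ[z]^N, for every j ∈ {1,…,n} there exists k ∈ ℕ with (z−x_j)^k·L_{j−1} ⊆ L_j ⊆ (z−x_j)^{−k}·L_{j−1}. Call a tuple (Λ₁,…,Λ_m) an 𝒪-lattice chain of length m if each Λ_i is a ℂ[[t]]-submodule of ℂ((t))^N satisfying t^k·ℂ[[t]]^N ⊆ Λ_i ⊆ t^{−k}·ℂ[[t]]^N for some k ∈ ℕ. Then the map sending an admissible chain (L₁,…,L_n) to the family, indexed by y ∈ S, of 𝒪-lattice chains (L̂^y_{j₁(y)}, …, L̂^y_{j_{m_y}(y)}), is a bijection from the set of admissible chains onto the product over y ∈ S of the sets of 𝒪-lattice chains of length m_y. (This is the paper's bijection (BDConv_n)_x ≅ ∏_{y ∈ supp(x)} Gr_{m_y} in the case G^∨ = GL_N, expressed in terms of lattices.)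 -/

import Mathlib

set_option synthInstance.maxHeartbeats 1000000
set_option maxHeartbeats 1000000

open scoped Classical

/-- The standard lattice `ℂ[z]^N` inside `ℂ(z)^N`, as a `ℂ[z]`-submodule:
the span of the standard basis vectors. -/
noncomputable def stdPolyLattice (N : ℕ) : Submodule (Polynomial ℂ) (Fin N → RatFunc ℂ) :=
  Submodule.span (Polynomial ℂ) (Set.range fun i : Fin N => Pi.single i (1 : RatFunc ℂ))

/-- The standard lattice `ℂ[[t]]^N` inside `ℂ((t))^N`, as a `ℂ[[t]]`-submodule:
the span of the standard basis vectors. -/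
noncomputable def stdPowLattice (N : ℕ) : Submodule (PowerSeries ℂ) (Fin N → LaurentSeries ℂ) :=
  Submodule.span (PowerSeries ℂ) (Set.range fun i : Fin N => Pi.single i (1 : LaurentSeries ℂ))

/-- The predecessor `L_{j-1}` of the `j`-th member of a tuple `(L₁, …, L_n)`,
with the convention `L₀ = L0`. -/
def chainPrev {M : Type*} {n : ℕ} (L0 : M) (L : Fin n → M) (j : Fin n) : M :=
  if h : (j : ℕ) = 0 then L0
  else L ⟨(j : ℕ) - 1, lt_of_le_of_lt (Nat.sub_le _ _) j.isLt⟩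

/-- An admissible chain: a tuple `(L₁, …, L_n)` of `ℂ[z]`-submodules of `ℂ(z)^N` such that,
with `L₀ = ℂ[z]^N`, for each `j` one has
`(z−x_j)^k·L_{j−1} ⊆ L_j ⊆ (z−x_j)^{−k}·L_{j−1}` for some `k ∈ ℕ`. -/
def IsAdmissibleChain (N : ℕ) {n : ℕ} (x : Fin n → ℂ)
    (L : Fin n → Submodule (Polynomial ℂ) (Fin N → RatFunc ℂ)) : Prop :=
  ∀ j : Fin n, ∃ k : ℕ,
    (∀ v ∈ chainPrev (stdPolyLattice N) L j,
      (algebraMap (Polynomial ℂ) (RatFunc ℂ) (Polynomial.X - Polynomial.C (x j))) ^ k • v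
        ∈ L j) ∧
    (∀ w ∈ L j,
      (algebraMap (Polynomial ℂ) (RatFunc ℂ) (Polynomial.X - Polynomial.C (x j))) ^ k • w
        ∈ chainPrev (stdPolyLattice N) L j)

/-- An `𝒪`-lattice: a `ℂ[[t]]`-submodule `Λ` of `ℂ((t))^N` such that
`t^k·ℂ[[t]]^N ⊆ Λ ⊆ t^{−k}·ℂ[[t]]^N` for some `k ∈ ℕ`, where `t` is the Laurent series
`HahnSeries.single 1 1`. -/
def IsOLattice (N : ℕ) (Λ : Submodule (PowerSeries ℂ) (Fin N → LaurentSeries ℂ)) : Prop :=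
  ∃ k : ℕ,
    (∀ v ∈ stdPowLattice N,
      ((HahnSeries.single (1 : ℤ) (1 : ℂ) : LaurentSeries ℂ)) ^ k • v ∈ Λ) ∧
    (∀ w ∈ Λ,
      ((HahnSeries.single (1 : ℤ) (1 : ℂ) : LaurentSeries ℂ)) ^ k • w ∈ stdPowLattice N)

/-- The `𝒪`-lattice `L̂^y` generated by the coordinatewise image of a `ℂ[z]`-submodule
`L ⊆ ℂ(z)^N` under the Laurent-expansion embedding `εy : ℂ(z) → ℂ((t))` at `y`. -/
noncomputable def latticeHat (N : ℕ) (εy : RatFunc ℂ →ₐ[ℂ] LaurentSeries ℂ)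
    (L : Submodule (Polynomial ℂ) (Fin N → RatFunc ℂ)) :
    Submodule (PowerSeries ℂ) (Fin N → LaurentSeries ℂ) :=
  Submodule.span (PowerSeries ℂ)
    ((fun (v : Fin N → RatFunc ℂ) (i : Fin N) => εy (v i)) '' (L : Set (Fin N → RatFunc ℂ)))

/-
Among the `ℂ[z]`-submodules commensurable with `L` at `y`, completion at `y` is inverted by
Beauville–Laszlo gluing: `Λ ↦ L[1/(z - y)] ∩ ε_y⁻¹(Λ)`. Gluing after completion is the identity
because a finitely generated submodule is free over the principal ideal domain `ℂ[z]`, a basis of it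
stays independent after Laurent expansion, and `z - y` divides a polynomial as soon as `t` divides
its expansion. Completion after gluing is the identity because polynomials are dense in power
series. A modification at another point does not change the completion at `y`, where `z - x_j` is a
unit. Hence every `L_j` has completions commensurable with the standard lattice, and it is
determined by `L_{j-1}` and its completion at `x_j`, which can be prescribed freely; induct on
`j`.
-/

section Chains

variable {α β : Type*} {n : ℕ}

lemma chainPrev_zero (a : α) (L : Fin (n + 1) → α) : chainPrev a L 0 = a :=
  dif_pos rfl

lemma chainPrev_succ (a : α) (L : Fin (n + 1) → α) (j : Fin n) :
    chainPrev a L j.succ = chainPrev (L 0) (Fin.tail L) j := by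
  rcases j with ⟨_ | j, hj⟩ <;> rfl

lemma forall_chainPrev_iff {step : Fin (n + 1) → α → α → Prop} {a : α} {L : Fin (n + 1) → α} :
    (∀ j, step j (chainPrev a L j) (L j)) ↔
      step 0 a (L 0) ∧ ∀ j, step (Fin.succ j) (chainPrev (L 0) (Fin.tail L) j) (Fin.tail L j) := by
  simp only [Fin.forall_fin_succ, chainPrev_zero, chainPrev_succ, Fin.tail]

theorem bijOn_chains {step : Fin n → α → α → Prop} {good : α → Prop} {h : Fin n → α → β}
    {T : Set β} (hgood : ∀ j a b, good a → step j a b → good b)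
    (hbij : ∀ j a, good a → Set.BijOn (h j) {b | step j a b} T) {a : α} (ha : good a) :
    Set.BijOn (fun L j ↦ h j (L j)) {L | ∀ j, step j (chainPrev a L j) (L j)}
      {Λ | ∀ j, Λ j ∈ T} := by
  induction n generalizing a with
  | zero => exact ⟨fun _ _ j ↦ j.elim0, fun _ _ _ _ _ ↦ Subsingleton.elim _ _,
      fun Λ _ ↦ ⟨fun j ↦ j.elim0, fun j ↦ j.elim0, Subsingleton.elim _ _⟩⟩
  | succ n ih =>
    have head := hbij 0 a ha
    have tail {b : α} (hb : step 0 a b) :=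
      ih (fun j ↦ hgood j.succ) (fun j ↦ hbij j.succ) (hgood 0 a b ha hb)
    refine ⟨fun L hL ↦ ?_, fun L hL L' hL' hLL' ↦ ?_, fun Λ hΛ ↦ ?_⟩
    · obtain ⟨h_head, h_tail⟩ := forall_chainPrev_iff.1 hL
      exact Fin.forall_fin_succ.2 ⟨head.mapsTo h_head, (tail h_head).mapsTo h_tail⟩
    · obtain ⟨h_head, h_tail⟩ := forall_chainPrev_iff.1 hL
      obtain ⟨h_head', h_tail'⟩ := forall_chainPrev_iff.1 hL'
      have eq_head : L 0 = L' 0 := head.injOn h_head h_head' (congrFun hLL' 0)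
      rw [← eq_head] at h_tail'
      have eq_tail : Fin.tail L = Fin.tail L' :=
        (tail h_head).injOn h_tail h_tail' (congrArg Fin.tail hLL')
      rw [← Fin.cons_self_tail L, ← Fin.cons_self_tail L', eq_head, eq_tail]
    · obtain ⟨b, hb, hbΛ⟩ := head.surjOn (hΛ 0)
      obtain ⟨L, hL, hLΛ⟩ := (tail hb).surjOn (fun j ↦ hΛ j.succ)
      exact ⟨Fin.cons b L, forall_chainPrev_iff.2 ⟨hb, hL⟩,
        funext (Fin.forall_fin_succ.2 ⟨hbΛ, congrFun hLΛ⟩)⟩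

/-- Regrouping a family along the fibres of `x`. -/
def familyEquivFiberwise {ι : Type*} (x : ι → α) :
    (ι → β) ≃ ((y : Set.range x) → {j // x j = (y : α)} → β) where
  toFun Λ _ j := Λ j
  invFun Λ j := Λ ⟨x j, j, rfl⟩ ⟨j, rfl⟩
  left_inv _ := rfl
  right_inv Λ := by
    funext ⟨y, hy⟩ ⟨j, hj⟩
    obtain rfl : x j = y := hj
    rfl

lemma bijOn_familyEquivFiberwise {ι : Type*} (x : ι → α) (T : Set β) :
    Set.BijOn (familyEquivFiberwise x) {Λ | ∀ j, Λ j ∈ T} {Λ | ∀ y j, Λ y j ∈ T} :=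
  (familyEquivFiberwise x).bijOn fun _ ↦ ⟨fun h j ↦ h ⟨x j, j, rfl⟩ ⟨j, rfl⟩, fun h _ j ↦ h j⟩

end Chains

section Commensurable

variable {R M : Type*} [CommSemiring R] [AddCommMonoid M] [Module R M]

/-- Commensurability of submodules up to powers of `π`: `π ^ k L ⊆ L'` and `π ^ k L' ⊆ L`. -/
def CommensurableAt (π : R) (L L' : Submodule R M) : Prop :=
  ∃ k : ℕ, (∀ v ∈ L, π ^ k • v ∈ L') ∧ ∀ v ∈ L', π ^ k • v ∈ L

namespace CommensurableAt

variable {π ρ : R} {L L' L'' : Submodule R M}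

lemma refl (π : R) (L : Submodule R M) : CommensurableAt π L L :=
  ⟨0, by simp, by simp⟩

lemma symm : CommensurableAt π L L' → CommensurableAt π L' L
  | ⟨k, h, h'⟩ => ⟨k, h', h⟩

lemma trans : CommensurableAt π L L' → CommensurableAt π L' L'' → CommensurableAt π L L''
  | ⟨k, h₁, h₂⟩, ⟨m, h₃, h₄⟩ => by
    refine ⟨k + m, fun v hv ↦ ?_, fun v hv ↦ ?_⟩
    · rw [add_comm, pow_add, mul_smul]
      exact h₃ _ (h₁ v hv)
    · rw [pow_add, mul_smul]
      exact h₂ _ (h₄ v hv)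

lemma of_dvd (hdvd : π ∣ ρ) : CommensurableAt π L L' → CommensurableAt ρ L L' := by
  rintro ⟨k, h, h'⟩
  obtain ⟨c, hc⟩ := pow_dvd_pow_of_dvd hdvd k
  rw [mul_comm] at hc
  refine ⟨k, fun v hv ↦ ?_, fun v hv ↦ ?_⟩ <;> rw [hc, mul_smul]
  · exact L'.smul_mem c (h v hv)
  · exact L.smul_mem c (h' v hv)

end CommensurableAt

lemma smul_mem_of_mem_span {s : Set M} {L : Submodule R M} {c : R} (h : ∀ v ∈ s, c • v ∈ L)
    {w : M} (hw : w ∈ Submodule.span R s) : c • w ∈ L :=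
  (Submodule.span_le (p := L.comap (LinearMap.lsmul R M c))).2 h hw

end Commensurable

section SpanImage

variable {R S V W : Type*} [CommRing R] [CommRing S] {σ : R →+* S}
  [AddCommGroup V] [Module R V] [AddCommGroup W] [Module S W]

/-- The `S`-submodule generated by the image of an `R`-submodule under a semilinear map. -/
def spanImage (φ : V →ₛₗ[σ] W) (L : Submodule R V) : Submodule S W :=
  Submodule.span S (φ '' L)

variable {φ : V →ₛₗ[σ] W} {π : R} {L L' : Submodule R V} {Λ : Submodule S W}

lemma map_mem_spanImage {v : V} (hv : v ∈ L) : φ v ∈ spanImage φ L :=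
  Submodule.subset_span ⟨v, hv, rfl⟩

lemma spanImage_le : spanImage φ L ≤ Λ ↔ ∀ v ∈ L, φ v ∈ Λ :=
  Submodule.span_le.trans Set.forall_mem_image

lemma spanImage_span (s : Set V) :
    spanImage φ (Submodule.span R s) = Submodule.span S (φ '' s) := by
  apply le_antisymm
  · rw [spanImage_le]
    exact (Submodule.span_le (p := (Submodule.span S (φ '' s)).comap φ)).2
      fun v hv ↦ Submodule.subset_span ⟨v, hv, rfl⟩
  · exact Submodule.span_mono (Set.image_mono Submodule.subset_span)

lemma smul_mem_of_mem_spanImage {r : R} (h : ∀ v ∈ L, φ (r • v) ∈ Λ) {w : W}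
    (hw : w ∈ spanImage φ L) : σ r • w ∈ Λ := by
  refine smul_mem_of_mem_span (Set.forall_mem_image.2 fun v hv ↦ ?_) hw
  rw [← map_smulₛₗ]
  exact h v hv

lemma CommensurableAt.spanImage (h : CommensurableAt π L L') :
    CommensurableAt (σ π) (spanImage φ L) (spanImage φ L') := by
  obtain ⟨k, h, h'⟩ := h
  refine ⟨k, fun w hw ↦ ?_, fun w hw ↦ ?_⟩ <;> rw [← map_pow]
  · exact smul_mem_of_mem_spanImage (fun v hv ↦ map_mem_spanImage (h v hv)) hw
  · exact smul_mem_of_mem_spanImage (fun v hv ↦ map_mem_spanImage (h' v hv)) hw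

lemma exists_eq_map_add_smul (hdense : ∀ s : S, ∃ r : R, σ π ∣ s - σ r) {w : W}
    (hw : w ∈ spanImage φ L) : ∃ v ∈ L, ∃ w' ∈ spanImage φ L, w = φ v + σ π • w' := by
  refine Submodule.span_induction ?_ ?_ ?_ ?_ hw
  · rintro _ ⟨v, hv, rfl⟩
    exact ⟨v, hv, 0, zero_mem _, by simp⟩
  · exact ⟨0, zero_mem _, 0, zero_mem _, by simp⟩
  · rintro _ _ _ _ ⟨v, hv, w, hw, rfl⟩ ⟨v', hv', w', hw', rfl⟩
    refine ⟨v + v', add_mem hv hv', w + w', add_mem hw hw', ?_⟩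
    rw [map_add]
    module
  · rintro s _ _ ⟨v, hv, w, hw, rfl⟩
    obtain ⟨r, t, hs⟩ := hdense s
    refine ⟨r • v, L.smul_mem r hv, t • φ v + s • w,
      add_mem (Submodule.smul_mem _ t (map_mem_spanImage hv)) (Submodule.smul_mem _ s hw), ?_⟩
    rw [eq_add_of_sub_eq' hs, map_smulₛₗ]
    module

lemma exists_eq_map_add_pow_smul (hdense : ∀ s : S, ∃ r : R, σ π ∣ s - σ r) (m : ℕ) {w : W}
    (hw : w ∈ spanImage φ L) : ∃ v ∈ L, ∃ w' ∈ spanImage φ L, w = φ v + σ π ^ m • w' := by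
  induction m with
  | zero => exact ⟨0, zero_mem _, w, hw, by simp⟩
  | succ m ih =>
    obtain ⟨v, hv, w', hw', rfl⟩ := ih
    obtain ⟨v', hv', w'', hw'', rfl⟩ := exists_eq_map_add_smul hdense hw'
    refine ⟨v + π ^ m • v', add_mem hv (L.smul_mem _ hv'), w'', hw'', ?_⟩
    rw [map_add, map_smulₛₗ, map_pow]
    module

/-- The property `L[1/π] ∩ φ⁻¹(S φ(L)) = L` of a submodule `L`, encoded by a single division by
`π`. It says that `L` is recovered from its localization away from `π` and its completion. -/
def IsSaturatedAt (φ : V →ₛₗ[σ] W) (π : R) (L : Submodule R V) : Prop :=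
  ∀ v, π • v ∈ L → φ v ∈ spanImage φ L → v ∈ L

lemma IsSaturatedAt.mem_of_pow_smul_mem (hL : IsSaturatedAt φ π L) (k : ℕ) {v : V}
    (hv : π ^ k • v ∈ L) (hφv : φ v ∈ spanImage φ L) : v ∈ L := by
  induction k with
  | zero => simpa using hv
  | succ k ih =>
    refine ih (hL _ ?_ ?_)
    · rwa [← mul_smul, ← pow_succ']
    · rw [map_smulₛₗ]
      exact Submodule.smul_mem _ _ hφv

lemma exists_fg_le_mem_spanImage {w : W} (hw : w ∈ spanImage φ L) :
    ∃ L₀ ≤ L, L₀.FG ∧ w ∈ spanImage φ L₀ := by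
  obtain ⟨T, hTL, hwT⟩ := Submodule.mem_span_finite_of_mem_span hw
  obtain ⟨s, hsL, rfl⟩ := Finset.subset_set_image_iff.1 hTL
  refine ⟨Submodule.span R s, Submodule.span_le.2 hsL, ⟨s, rfl⟩, ?_⟩
  rwa [spanImage_span, ← Finset.coe_image]

lemma isSaturatedAt_span_range {κ : Type*} [Finite κ] {b : κ → V}
    (hb : LinearIndependent S (φ ∘ b)) (hreg : IsSMulRegular V π)
    (hdvd : ∀ r, σ π ∣ σ r → π ∣ r) : IsSaturatedAt φ π (Submodule.span R (Set.range b)) := by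
  cases nonempty_fintype κ
  intro v hπv hφv
  rw [spanImage_span, ← Set.range_comp] at hφv
  obtain ⟨c, hc⟩ := Submodule.mem_span_range_iff_exists_fun R |>.1 hπv
  obtain ⟨s, hs⟩ := Submodule.mem_span_range_iff_exists_fun S |>.1 hφv
  have same_combination : ∑ i, σ (c i) • (φ ∘ b) i = ∑ i, (σ π * s i) • (φ ∘ b) i := by
    simpa [map_sum, ← hs, Finset.smul_sum, mul_smul] using congrArg φ hc
  have π_dvd (i : κ) : π ∣ c i :=
    hdvd _ ⟨s i, hb.eq_coords_of_eq same_combination i⟩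
  choose d hd using π_dvd
  have hv : ∑ i, d i • b i = v := hreg <| by
    simp only [Finset.smul_sum, ← mul_smul, ← hd, hc]
  exact (Submodule.mem_span_range_iff_exists_fun R).2 ⟨d, hv⟩

lemma isSaturatedAt_of_fg [IsDomain R] [IsPrincipalIdealRing R] [Module.IsTorsionFree R V]
    (hind : ∀ (m : ℕ) (b : Fin m → V), LinearIndependent R b → LinearIndependent S (φ ∘ b))
    (hπ : π ≠ 0) (hdvd : ∀ r, σ π ∣ σ r → π ∣ r) (hL : L.FG) : IsSaturatedAt φ π L := by
  have : Module.Finite R L := Module.Finite.iff_fg.2 hL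
  let b := Module.finBasis R L
  have span_b : Submodule.span R (Set.range (L.subtype ∘ b)) = L := by
    rw [Set.range_comp, Submodule.span_image, b.span_eq, Submodule.map_subtype_top]
  have b_indep : LinearIndependent R (L.subtype ∘ b) :=
    b.linearIndependent.map' _ L.ker_subtype
  rw [← span_b]
  exact isSaturatedAt_span_range (hind _ _ b_indep) (IsSMulRegular.of_ne_zero hπ) hdvd

theorem isSaturatedAt_of_isPrincipalIdealRing [IsDomain R] [IsPrincipalIdealRing R]
    [Module.IsTorsionFree R V]
    (hind : ∀ (m : ℕ) (b : Fin m → V), LinearIndependent R b → LinearIndependent S (φ ∘ b))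
    (hπ : π ≠ 0) (hdvd : ∀ r, σ π ∣ σ r → π ∣ r) (L : Submodule R V) : IsSaturatedAt φ π L := by
  intro v hπv hφv
  obtain ⟨L₀, hL₀, L₀_fg, hφv₀⟩ := exists_fg_le_mem_spanImage hφv
  have hsup : L₀ ⊔ Submodule.span R {π • v} ≤ L :=
    sup_le hL₀ ((Submodule.span_singleton_le_iff_mem _ _).2 hπv)
  refine hsup (isSaturatedAt_of_fg hind hπ hdvd (L₀_fg.sup (Submodule.fg_span_singleton _)) v ?_ ?_)
  · exact Submodule.mem_sup_right (Submodule.mem_span_singleton_self _)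
  · exact Submodule.span_mono (Set.image_mono (SetLike.coe_subset_coe.2 le_sup_left)) hφv₀

/-- The Beauville–Laszlo gluing `L[1/π] ∩ φ⁻¹(Λ)` of a lattice `L` away from `π` with a lattice `Λ`
over the completion at `π`. The submodule `L[1/π]` is encoded as the preimage of the
`π`-power torsion of `V ⧸ L`. -/
def glue (φ : V →ₛₗ[σ] W) (π : R) (L : Submodule R V) (Λ : Submodule S W) : Submodule R V :=
  (Submodule.torsion' R (V ⧸ L) (Submonoid.powers π)).comap L.mkQ ⊓ Λ.comap φ

lemma mem_glue {v : V} : v ∈ glue φ π L Λ ↔ (∃ k : ℕ, π ^ k • v ∈ L) ∧ φ v ∈ Λ := by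
  simp [glue, Submodule.mem_torsion'_iff, Submonoid.mem_powers_iff, Submonoid.smul_def,
    ← Submodule.Quotient.mk_smul, Submodule.Quotient.mk_eq_zero]

lemma commensurableAt_glue (hL : IsSaturatedAt φ π L)
    (h : CommensurableAt (σ π) (spanImage φ L) Λ) : CommensurableAt π L (glue φ π L Λ) := by
  obtain ⟨a, hLΛ, hΛL⟩ := h
  refine ⟨a, fun v hv ↦ mem_glue.2 ⟨⟨0, ?_⟩, ?_⟩, fun v hv ↦ ?_⟩
  · rw [pow_zero, one_smul]
    exact L.smul_mem _ hv
  · rw [map_smulₛₗ, map_pow]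
    exact hLΛ _ (map_mem_spanImage hv)
  · obtain ⟨⟨k, hk⟩, hφv⟩ := mem_glue.1 hv
    refine hL.mem_of_pow_smul_mem k ?_ ?_
    · rw [smul_comm]
      exact L.smul_mem _ hk
    · rw [map_smulₛₗ, map_pow]
      exact hΛL _ hφv

lemma spanImage_glue (hdense : ∀ s : S, ∃ r : R, σ π ∣ s - σ r)
    (hdiv : Function.Surjective fun v : V ↦ π • v) (hreg : IsSMulRegular W (σ π))
    (h : CommensurableAt (σ π) (spanImage φ L) Λ) : spanImage φ (glue φ π L Λ) = Λ := by
  refine le_antisymm (spanImage_le.2 fun v hv ↦ (mem_glue.1 hv).2) fun w hw ↦ ?_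
  obtain ⟨a, hLΛ, hΛL⟩ := h
  obtain ⟨v, hv, w', hw', hw_eq⟩ := exists_eq_map_add_pow_smul hdense (a + a) (hΛL w hw)
  obtain ⟨u, rfl⟩ : ∃ u, π ^ a • u = v := by
    simpa only [← smul_iterate] using hdiv.iterate a v
  have w_eq : w = φ u + σ π ^ a • w' := hreg.pow a <| by
    simpa only [map_smulₛₗ, map_pow, pow_add, mul_smul, smul_add] using hw_eq
  have u_mem : u ∈ glue φ π L Λ := by
    refine mem_glue.2 ⟨⟨a, hv⟩, ?_⟩
    rw [← add_sub_cancel_right (φ u), ← w_eq]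
    exact sub_mem hw (hLΛ w' hw')
  have smul_mem_glue {l : V} (hl : l ∈ L) : π ^ a • l ∈ glue φ π L Λ := by
    refine mem_glue.2 ⟨⟨0, by simpa using L.smul_mem _ hl⟩, ?_⟩
    rw [map_smulₛₗ, map_pow]
    exact hLΛ _ (map_mem_spanImage hl)
  rw [w_eq, ← map_pow]
  exact add_mem (map_mem_spanImage u_mem)
    (smul_mem_of_mem_spanImage (fun l hl ↦ map_mem_spanImage (smul_mem_glue hl)) hw')

lemma glue_spanImage (hL' : IsSaturatedAt φ π L') (h : CommensurableAt π L L') :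
    glue φ π L (spanImage φ L') = L' := by
  obtain ⟨a, hLL', hL'L⟩ := h
  ext v
  rw [mem_glue]
  refine ⟨fun ⟨⟨k, hk⟩, hφv⟩ ↦ ?_, fun hv ↦ ⟨⟨a, hL'L v hv⟩, map_mem_spanImage hv⟩⟩
  refine hL'.mem_of_pow_smul_mem (a + k) ?_ hφv
  rw [pow_add, mul_smul]
  exact hLL' _ hk

theorem bijOn_spanImage (hdense : ∀ s : S, ∃ r : R, σ π ∣ s - σ r)
    (hdiv : Function.Surjective fun v : V ↦ π • v) (hreg : IsSMulRegular W (σ π))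
    (hsat : ∀ L : Submodule R V, IsSaturatedAt φ π L) (L : Submodule R V) :
    Set.BijOn (spanImage φ) {L' | CommensurableAt π L L'}
      {Λ | CommensurableAt (σ π) (spanImage φ L) Λ} :=
  Set.InvOn.bijOn (f' := glue φ π L)
    ⟨fun L' h ↦ glue_spanImage (hsat L') h, fun _ h ↦ spanImage_glue hdense hdiv hreg h⟩
    (fun _ h ↦ h.spanImage) fun _ h ↦ commensurableAt_glue (hsat L) h

end SpanImage

section LaurentExpansion

open scoped Polynomial PowerSeries LaurentSeries

variable {k ι : Type*} [Field k]

/-- Taylor expansion `p ↦ p(y + t)` of polynomials at `y`, as a map to power series. -/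
noncomputable def taylorSeries (y : k) : k[X] →+* k⟦X⟧ :=
  Polynomial.coeToPowerSeries.ringHom.comp (Polynomial.taylorAlgHom y).toRingHom

lemma taylorSeries_apply (y : k) (p : k[X]) :
    taylorSeries y p = (Polynomial.taylor y p : k⟦X⟧) :=
  rfl

lemma taylorSeries_X_sub_C (y a : k) :
    taylorSeries y (Polynomial.X - Polynomial.C a) = PowerSeries.X + PowerSeries.C (y - a) := by
  simp [taylorSeries_apply, add_sub_assoc]

lemma taylorSeries_X_sub_C_self (y : k) :
    taylorSeries y (Polynomial.X - Polynomial.C y) = PowerSeries.X := by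
  simp [taylorSeries_X_sub_C]

lemma taylorSeries_X_sub_C_dvd_X (y a : k) :
    taylorSeries y (Polynomial.X - Polynomial.C a) ∣ PowerSeries.X := by
  rw [taylorSeries_X_sub_C]
  rcases eq_or_ne y a with rfl | hya
  · simp
  · refine IsUnit.dvd (PowerSeries.isUnit_iff_constantCoeff.2 ?_)
    simpa using sub_ne_zero.2 hya

lemma X_sub_C_dvd_of_taylorSeries_dvd {y : k} {p : k[X]}
    (h : taylorSeries y (Polynomial.X - Polynomial.C y) ∣ taylorSeries y p) :
    Polynomial.X - Polynomial.C y ∣ p := by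
  rw [taylorSeries_X_sub_C_self, PowerSeries.X_dvd_iff, taylorSeries_apply] at h
  rw [Polynomial.dvd_iff_isRoot, Polynomial.IsRoot.def, ← Polynomial.taylor_coeff_zero]
  simpa using h

lemma exists_taylorSeries_dvd_sub (y : k) (s : k⟦X⟧) :
    ∃ p : k[X], taylorSeries y (Polynomial.X - Polynomial.C y) ∣ s - taylorSeries y p := by
  refine ⟨Polynomial.C (PowerSeries.constantCoeff s), ?_⟩
  rw [taylorSeries_X_sub_C_self, PowerSeries.X_dvd_iff]
  simp [taylorSeries_apply]

section Expansion

variable {e : RatFunc k →ₐ[k] k⸨X⸩} {y : k}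
  (he : e RatFunc.X = HahnSeries.single (0 : ℤ) y + HahnSeries.single (1 : ℤ) (1 : k))

include he in
lemma expansion_algebraMap (p : k[X]) :
    e (algebraMap k[X] (RatFunc k) p) = algebraMap k⟦X⟧ k⸨X⸩ (taylorSeries y p) := by
  suffices e.toRingHom.comp (algebraMap k[X] (RatFunc k)) =
      (algebraMap k⟦X⟧ k⸨X⸩).comp (taylorSeries y) from RingHom.congr_fun this p
  refine Polynomial.ringHom_ext (fun a ↦ ?_) ?_
  · simpa [taylorSeries_apply, LaurentSeries.coe_algebraMap, HahnSeries.algebraMap_apply']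
      using e.commutes a
  · simp [taylorSeries_apply, he, add_comm]

/-- Coordinatewise Laurent expansion at `y`, semilinear over the Taylor expansion of polynomials. -/
noncomputable def expansion : (ι → RatFunc k) →ₛₗ[taylorSeries y] (ι → k⸨X⸩) where
  toFun v i := e (v i)
  map_add' v w := by
    ext1 i
    exact map_add e (v i) (w i)
  map_smul' p v := by
    ext1 i
    simp only [Pi.smul_apply, Algebra.smul_def, map_mul, expansion_algebraMap he]

lemma expansion_single [DecidableEq ι] (i : ι) :
    expansion he (Pi.single i 1) = Pi.single i 1 := by
  ext1 j
  exact (Pi.apply_single (fun _ ↦ e) (fun _ ↦ map_zero e) i 1 j).trans (by rw [map_one])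

lemma linearIndependent_expansion [Finite ι] {κ : Type*} {b : κ → ι → RatFunc k}
    (hb : LinearIndependent k[X] b) : LinearIndependent k⟦X⟧ (expansion he ∘ b) :=
  letI : Algebra (RatFunc k) k⸨X⸩ := e.toRingHom.toAlgebra
  have indep_laurent : LinearIndependent k⸨X⸩ (expansion he ∘ b) :=
    linearIndependent_algebraMap_comp_iff.2
      ((LinearIndependent.iff_fractionRing k[X] (RatFunc k)).1 hb)
  indep_laurent.restrict_scalars' k⟦X⟧

lemma isSaturatedAt_expansion [Finite ι] (L : Submodule k[X] (ι → RatFunc k)) :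
    IsSaturatedAt (expansion he) (Polynomial.X - Polynomial.C y) L :=
  have : Module.IsTorsionFree k[X] (ι → RatFunc k) := .trans_faithfulSMul _ (RatFunc k) _
  isSaturatedAt_of_isPrincipalIdealRing (fun _ _ ↦ linearIndependent_expansion he)
    (Polynomial.X_sub_C_ne_zero y) (fun _ ↦ X_sub_C_dvd_of_taylorSeries_dvd) L

lemma smul_surjective_of_ne_zero {p : k[X]} (hp : p ≠ 0) :
    Function.Surjective fun v : ι → RatFunc k ↦ p • v := fun v ↦ by
  refine ⟨(algebraMap k[X] (RatFunc k) p)⁻¹ • v, ?_⟩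
  simp only [← algebraMap_smul (RatFunc k) p, smul_inv_smul₀ (RatFunc.algebraMap_ne_zero hp)]

lemma bijOn_spanImage_expansion [Finite ι] (L : Submodule k[X] (ι → RatFunc k)) :
    Set.BijOn (spanImage (expansion he))
      {L' | CommensurableAt (Polynomial.X - Polynomial.C y) L L'}
      {Λ | CommensurableAt PowerSeries.X (spanImage (expansion he) L) Λ} := by
  rw [← taylorSeries_X_sub_C_self y]
  refine bijOn_spanImage (exists_taylorSeries_dvd_sub y)
    (smul_surjective_of_ne_zero (Polynomial.X_sub_C_ne_zero y)) ?_ (isSaturatedAt_expansion he) L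
  have : Module.IsTorsionFree k⟦X⟧ (ι → k⸨X⸩) := .trans_faithfulSMul _ k⸨X⸩ _
  rw [taylorSeries_X_sub_C_self]
  exact IsSMulRegular.of_ne_zero PowerSeries.X_ne_zero

/-- The submodule `R^ι` of `K^ι`, spanned by the standard basis. -/
def standardLattice (R K ι : Type*) [Semiring R] [Semiring K] [Module R K] [DecidableEq ι] :
    Submodule R (ι → K) :=
  Submodule.span R (Set.range fun i ↦ Pi.single i (1 : K))

lemma spanImage_standardLattice [DecidableEq ι] :
    spanImage (expansion he) (standardLattice k[X] (RatFunc k) ι) =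
      standardLattice k⟦X⟧ k⸨X⸩ ι := by
  rw [standardLattice, spanImage_span, ← Set.range_comp]
  simp only [Function.comp_def, expansion_single, standardLattice]

end Expansion

theorem bd_fiber_bijection_general [Finite ι] [DecidableEq ι] {n : ℕ} (x : Fin n → k)
    (ε : k → RatFunc k →ₐ[k] k⸨X⸩)
    (hε : ∀ y, ε y RatFunc.X =
      HahnSeries.single (0 : ℤ) y + HahnSeries.single (1 : ℤ) (1 : k)) :
    Set.BijOn
      (fun (L : Fin n → Submodule k[X] (ι → RatFunc k)) (y : Set.range x)
          (j : {j // x j = (y : k)}) ↦ spanImage (expansion (hε y)) (L j))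
      {L | ∀ j, CommensurableAt (Polynomial.X - Polynomial.C (x j))
        (chainPrev (standardLattice k[X] (RatFunc k) ι) L j) (L j)}
      {Λ | ∀ y j, CommensurableAt PowerSeries.X (standardLattice k⟦X⟧ k⸨X⸩ ι) (Λ y j)} := by
  let good (L : Submodule k[X] (ι → RatFunc k)) : Prop :=
    ∀ y, CommensurableAt PowerSeries.X (standardLattice k⟦X⟧ k⸨X⸩ ι)
      (spanImage (expansion (hε y)) L)
  have good_standard : good (standardLattice k[X] (RatFunc k) ι) := fun y ↦ by
    rw [spanImage_standardLattice]
    exact .refl _ _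
  have good_step {a : k} {L L' : Submodule k[X] (ι → RatFunc k)} (hL : good L)
      (h : CommensurableAt (Polynomial.X - Polynomial.C a) L L') : good L' := fun y ↦
    (hL y).trans (h.spanImage.of_dvd (taylorSeries_X_sub_C_dvd_X y a))
  have bijOn_step {y : k} {L : Submodule k[X] (ι → RatFunc k)} (hL : good L) :
      Set.BijOn (spanImage (expansion (hε y)))
        {L' | CommensurableAt (Polynomial.X - Polynomial.C y) L L'}
        {Λ | CommensurableAt PowerSeries.X (standardLattice k⟦X⟧ k⸨X⸩ ι) Λ} := by
    convert bijOn_spanImage_expansion (hε y) L using 3 with Λ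
    exact ⟨(hL y).symm.trans, (hL y).trans⟩
  have bijOn_tuples := bijOn_chains (h := fun j ↦ spanImage (expansion (hε (x j))))
    (step := fun j ↦ CommensurableAt (Polynomial.X - Polynomial.C (x j))) (good := good)
    (fun _ _ _ ↦ good_step) (fun j _ ↦ bijOn_step) good_standard
  refine ((bijOn_familyEquivFiberwise x _).comp bijOn_tuples).congr fun L _ ↦ ?_
  funext ⟨y, hy⟩ ⟨j, hj⟩
  obtain rfl : x j = y := hj
  rfl

end LaurentExpansion

lemma isAdmissibleChain_iff {N n : ℕ} {x : Fin n → ℂ}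
    {L : Fin n → Submodule (Polynomial ℂ) (Fin N → RatFunc ℂ)} :
    IsAdmissibleChain N x L ↔ ∀ j, CommensurableAt (Polynomial.X - Polynomial.C (x j))
      (chainPrev (standardLattice (Polynomial ℂ) (RatFunc ℂ) (Fin N)) L j) (L j) := by
  simp only [IsAdmissibleChain, CommensurableAt, ← map_pow, algebraMap_smul]
  rfl

lemma isOLattice_iff {N : ℕ} {Λ : Submodule (PowerSeries ℂ) (Fin N → LaurentSeries ℂ)} :
    IsOLattice N Λ ↔
      CommensurableAt PowerSeries.X
        (standardLattice (PowerSeries ℂ) (LaurentSeries ℂ) (Fin N)) Λ := by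
  simp only [IsOLattice, CommensurableAt, ← HahnSeries.ofPowerSeries_X,
    ← LaurentSeries.coe_algebraMap, ← map_pow]
  rfl

/-- The fiber of the Beilinson–Drinfeld convolution Grassmannian for `GL_N` over a point
`x = (x₁,…,x_n) ∈ ℂⁿ` (Proposition `pr:FibBDConv` of Baumann–Gaussent–Littelmann,
expressed in terms of lattices): given for each `y ∈ ℂ` the Laurent-expansion embedding
`ε y : ℂ(z) → ℂ((t))` at `z = y` (the `ℂ`-algebra map with `ε y (z) = y + t`), the map
sending an admissible chain `(L₁,…,L_n)` to the family, indexed by the values `y` of `x`,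
of the tuples of `𝒪`-lattices `(L̂^y_j)_{j : x_j = y}`, is a bijection from the set of
admissible chains onto the set of families of tuples of `𝒪`-lattices (the product over
`y ∈ supp x` of the sets of `𝒪`-lattice chains of length `m_y`). -/
theorem bd_fiber_bijection (N n : ℕ) (hN : 1 ≤ N) (hn : 1 ≤ n)
    (x : Fin n → ℂ)
    (ε : ℂ → (RatFunc ℂ →ₐ[ℂ] LaurentSeries ℂ))
    (hε : ∀ y : ℂ, ε y RatFunc.X =
      HahnSeries.single (0 : ℤ) y + HahnSeries.single (1 : ℤ) (1 : ℂ)) :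
    Set.BijOn
      (fun (L : Fin n → Submodule (Polynomial ℂ) (Fin N → RatFunc ℂ))
          (y : Set.range x) (j : {j : Fin n // x j = (y : ℂ)}) =>
        latticeHat N (ε (y : ℂ)) (L j.1))
      {L | IsAdmissibleChain N x L}
      {Λ : (y : Set.range x) → {j : Fin n // x j = (y : ℂ)} →
          Submodule (PowerSeries ℂ) (Fin N → LaurentSeries ℂ) |
        ∀ y j, IsOLattice N (Λ y j)} := by
  simp only [isAdmissibleChain_iff, isOLattice_iff]
  exact bd_fiber_bijection_general x ε hε
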